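/- Let ρ_n, c, L, A, D, μ, η, p_M > 0 be constants and fix ε ∈ (0, 0.9]. For q ∈ ℝ define Re(q) = ρ_n|q|D/(μA), the friction factor f(q) = 64/Re(q) when 0 < Re(q) < 2300 and f(q) = (2·log₁₀((4.518/Re(q))·log₁₀(Re(q)/7) + ε))⁻² when Re(q) ≥ 2300, and the resistive coefficient R(q) = f(q)·ρ_n²·c²·L·|q|/(2·η²·D·A²·p_M) for q ≠ 0 with R(0)·0 := 0. Suppose a differentiable function q : ℝ → ℝ and continuous input functions p_l, p_r : ℝ → ℝ satisfy (ρ_n L/A)·q'(t) = −R(q(t))·q(t) + p_l(t) − p_r(t) for all t. Then the storage function S(t) = (ρ_n L/(2A))·q(t)² satisfies S'(t) ≤ (p_l(t) − p_r(t))·q(t) − ρ·q(t)², where ρ = 32·μ·ρ_n·c²·L/(η²·D²·A·p_M) > 0. -/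

import Mathlib

/-!
The claim reduces to `ρ q² ≤ R(q) q²`, because `S' = (ρₙ L / A) q q' = (p_l - p_r) q - R(q) q²`.
As `|q| = Re(q) μ A / (ρₙ D)`, one has `R(q) = (Re(q) f(q) / 64) ρ`, so it suffices that
`64 ≤ Re f`. In the laminar regime this is an equality (when `q ≠ 0`). In the turbulent regime, with
`X = (4.518 / Re) log₁₀(Re / 7) + ε`, it says `16 |log₁₀ X| ≤ √Re` together with `log₁₀ X ≠ 0`.
Both follow from `9 / Re ≤ X < 1` for `Re ≥ 2300` and the bound `16 log₁₀(Re / 9) ≤ √Re`, all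
obtained from tangent lines of the logarithm (`64 ≤ Re f` is `hofer_lower`).
-/

lemma log_ten_gt : (2.27 : ℝ) < Real.log 10 := by
  have h : Real.log 10 = 3 * Real.log 2 + Real.log (5 / 4) := by
    rw [show (10 : ℝ) = 2 ^ 3 * (5 / 4) by norm_num, Real.log_mul (by norm_num) (by norm_num),
      Real.log_pow]
    norm_num
  have h1 := Real.one_sub_inv_le_log_of_pos (show (0 : ℝ) < 5 / 4 by norm_num)
  have h2 := Real.log_two_gt_d9
  norm_num at h1
  linarith

/-- The tangent line of the logarithm at `2 ^ n` lies above its graph. -/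
lemma log_le_tangent_two_pow (n : ℕ) {x : ℝ} (hx : 0 < x) :
    Real.log x ≤ x / 2 ^ n + n * Real.log 2 - 1 := by
  have h := Real.log_le_sub_one_of_pos (show 0 < x / 2 ^ n by positivity)
  rw [Real.log_div hx.ne' (by positivity), Real.log_pow] at h
  linarith

/-- The argument of the logarithm in the Hofer law is strictly less than `1`. -/
lemma hofer_arg_lt_one {r ε : ℝ} (hr : 2300 ≤ r) (hε : ε ≤ 0.9) :
    4.518 / r * Real.logb 10 (r / 7) + ε < 1 := by
  have hr0 : 0 < r := by linarith
  have h10 := log_ten_gt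
  have h2 := Real.log_two_lt_d9
  have h := log_le_tangent_two_pow 6 (show 0 < r / 7 by positivity)
  norm_num at h
  have hb : Real.logb 10 (r / 7) ≤ r / 100 := by
    rw [Real.logb, div_le_iff₀ (by linarith)]
    nlinarith
  have : 4.518 / r * Real.logb 10 (r / 7) ≤ 4.518 / r * (r / 100) := by gcongr
  have e : 4.518 / r * (r / 100) = 0.04518 := by field_simp; norm_num
  rw [e] at this
  norm_num at *
  linarith

/-- The argument of the logarithm in the Hofer law is at least `9 / r`, since
`log₁₀ (r / 7) ≥ log₁₀ 100 = 2`. -/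
lemma hofer_arg_ge {r ε : ℝ} (hr : 2300 ≤ r) (hε : 0 < ε) :
    9 / r ≤ 4.518 / r * Real.logb 10 (r / 7) + ε := by
  have hr0 : 0 < r := by linarith
  have hb : 2 ≤ Real.logb 10 (r / 7) := by
    rw [Real.le_logb_iff_rpow_le (by norm_num) (by positivity)]
    norm_num
    linarith
  have h1 : 4.518 / r * 2 ≤ 4.518 / r * Real.logb 10 (r / 7) := by gcongr
  have h2 : 9 / r ≤ 4.518 / r * 2 := by
    rw [div_mul_eq_mul_div]
    gcongr
    norm_num
  linarith

/-- Tangent line of the logarithm at `√r / 3 = 8`. The constant `9` cannot be replaced by `1`: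
`16 log₁₀ r > √r` at `r = 2300`. -/
lemma log_div_nine_le {r : ℝ} (hr : 2300 ≤ r) :
    16 * Real.log (r / 9) ≤ √r * Real.log 10 := by
  have hr0 : 0 < r := by linarith
  have hs : 47 ≤ √r := Real.le_sqrt_of_sq_le (by linarith)
  have e : r / 9 = (√r / 3) ^ 2 := by
    rw [div_pow, Real.sq_sqrt hr0.le]
    norm_num
  have h := log_le_tangent_two_pow 3 (show 0 < √r / 3 by positivity)
  have h10 := log_ten_gt
  have h2 := Real.log_two_lt_d9
  rw [e, Real.log_pow]
  norm_num at h ⊢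
  nlinarith

/-- The Hofer friction factor is at least the Hagen–Poiseuille one throughout `r ≥ 2300`. -/
lemma hofer_lower {r ε : ℝ} (hr : 2300 ≤ r) (hε : ε ∈ Set.Ioc (0 : ℝ) 0.9) :
    64 ≤ r * ((2 * Real.logb 10 (4.518 / r * Real.logb 10 (r / 7) + ε)) ^ 2)⁻¹ := by
  have hr0 : 0 < r := by linarith
  have h1 := hofer_arg_lt_one hr hε.2
  have h2 := hofer_arg_ge hr hε.1
  set X := 4.518 / r * Real.logb 10 (r / 7) + ε
  have hX : 0 < X := lt_of_lt_of_le (by positivity) h2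
  have h10 : 0 < Real.log 10 := by linarith [log_ten_gt]
  -- Strict negativity matters: at `X = 1` the inverse below would be `0⁻¹ = 0`.
  have hneg : Real.logb 10 X < 0 := Real.logb_neg (by norm_num) hX h1
  have hlow : -√r ≤ 16 * Real.logb 10 X := by
    have h3 := Real.log_le_log (by positivity) h2
    have h4 := log_div_nine_le hr
    rw [← inv_div r 9, Real.log_inv] at h3
    rw [Real.logb, ← mul_div_assoc, le_div_iff₀ h10]
    linarith
  have hsq := Real.sq_sqrt hr0.le
  rw [← div_eq_mul_inv, le_div_iff₀ (by nlinarith)]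
  nlinarith [Real.sqrt_nonneg r]


/-- Output-feedback passivity of the pipeline's inductive-resistive subsystem
(Remark 5 of the paper): the storage `S = (ρ_n L/(2A)) q²` satisfies
`S' ≤ (p_l − p_r)·q − ρ·q²` with `ρ` the constant laminar resistance. -/
theorem pipeline_OFP
    (ρn c L A D μ η pM ε : ℝ)
    (hρn : 0 < ρn) (hc : 0 < c) (hL : 0 < L) (hA : 0 < A) (hD : 0 < D)
    (hμ : 0 < μ) (hη : 0 < η) (hpM : 0 < pM) (hε : ε ∈ Set.Ioc (0 : ℝ) 0.9)
    (Re f R : ℝ → ℝ)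
    (hRe : ∀ q : ℝ, Re q = ρn * |q| * D / (μ * A))
    (hf : ∀ q : ℝ, f q = if 2300 ≤ Re q then
        ((2 * Real.logb 10 ((4.518 / Re q) * Real.logb 10 (Re q / 7) + ε)) ^ 2)⁻¹
      else 64 / Re q)
    (hRdef : ∀ q : ℝ, R q = f q * ρn ^ 2 * c ^ 2 * L * |q| /
      (2 * η ^ 2 * D * A ^ 2 * pM))
    (q pl pr : ℝ → ℝ) (hq : Differentiable ℝ q)
    (hpl : Continuous pl) (hpr : Continuous pr)
    (hdyn : ∀ t, (ρn * L / A) * deriv q t = -(R (q t) * q t) + pl t - pr t)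
    (S : ℝ → ℝ) (hS : ∀ t, S t = (ρn * L / (2 * A)) * q t ^ 2)
    (ρ : ℝ) (hρ : ρ = 32 * μ * ρn * c ^ 2 * L / (η ^ 2 * D ^ 2 * A * pM)) :
    0 < ρ ∧ ∀ t, deriv S t ≤ (pl t - pr t) * q t - ρ * q t ^ 2 := by
  have hρ0 : 0 < ρ := by rw [hρ]; positivity
  refine ⟨hρ0, fun t => ?_⟩
  have hR : ρ * q t ^ 2 ≤ R (q t) * q t ^ 2 := by
    rcases eq_or_ne (q t) 0 with h0 | h0
    · simp [h0]
    have habs : 0 < |q t| := abs_pos.mpr h0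
    have hRe0 : 0 < Re (q t) := by rw [hRe]; positivity
    have hf64 : 64 ≤ Re (q t) * f (q t) := by
      rw [hf]
      split_ifs with h
      · exact hofer_lower h hε
      · exact (mul_div_cancel₀ _ hRe0.ne').ge
    have hRρ : R (q t) = Re (q t) * f (q t) / 64 * ρ := by
      rw [hRdef, hρ, hRe]
      field_simp
      ring
    gcongr
    rw [hRρ]
    nlinarith
  have hSd : deriv S t = (ρn * L / A) * deriv q t * q t := by
    have h := (((hq t).hasDerivAt.pow 2).const_mul (ρn * L / (2 * A))).deriv
    rw [show S = fun t => (ρn * L / (2 * A)) * q t ^ 2 from funext hS]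
    refine h.trans ?_
    norm_num
    field_simp
  rw [hSd, hdyn]
  linarith
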